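/- arXiv:1904.09760 — 10 statements merged into one kernel-verified Lean document; each statement's English description precedes it below -/
import Mathlib

section
/- Let $n, l \geq 0$ and $0 \leq k \leq n$ be integers. The determinant of the $(l+1) \times (l+1)$ matrix whose $(i,j)$ entry (for $0 \leq i, j \leq l$) is the binomial coefficient $\binom{n+i+j}{k+j}$ equals $\dfrac{\left(\prod_{m=0}^{l}(n+m)!\right)\left(\prod_{m=0}^{l} m!\right)}{\left(\prod_{m=0}^{l}(k+m)!\right)\left(\prod_{m=0}^{l}(n-k+m)!\right)}$ (in particular this determinant is a positive rational number, hence a positive integer). -/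
open Finset

/-- The determinant of the ascending factorials `(n+i+1)(n+i+2)⋯(n+i+j)` is a superfactorial. -/
theorem det_ascPochhammer_eval_eq_prod_factorial (n l : ℕ) :
    (Matrix.of fun i j : Fin (l + 1) =>
        (ascPochhammer ℚ (j : ℕ)).eval (((i : ℕ) : ℚ) + (n + 1))).det =
      ∏ m ∈ Finset.range (l + 1), (Nat.factorial m : ℚ) := by
  rw [← Matrix.det_eval_matrixOfPolynomials_eq_det_vandermonde
      (fun i : Fin (l + 1) => ((i : ℕ) : ℚ) + (n + 1)) (fun j => ascPochhammer ℚ (j : ℕ))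
      (fun j => ascPochhammer_natDegree ℚ (j : ℕ)) (fun j => monic_ascPochhammer ℚ (j : ℕ)),
    Matrix.det_vandermonde_add, Matrix.det_vandermonde_id_eq_superFactorial,
    ← Nat.prod_range_succ_factorial, Nat.cast_prod]

/-- The Hankel determinant of the shifted factorials. -/
theorem det_factorial_add_add (n l : ℕ) :
    (Matrix.of fun i j : Fin (l + 1) =>
        (Nat.factorial (n + (i : ℕ) + (j : ℕ)) : ℚ)).det =
      (∏ m ∈ Finset.range (l + 1), (Nat.factorial (n + m) : ℚ)) *
        ∏ m ∈ Finset.range (l + 1), (Nat.factorial m : ℚ) := by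
  rw [← det_ascPochhammer_eval_eq_prod_factorial n l,
    ← Fin.prod_univ_eq_prod_range (fun m => (Nat.factorial (n + m) : ℚ)),
    ← Matrix.det_mul_column]
  congr 1
  ext i j
  simp only [Matrix.of_apply]
  rw [← factorial_mul_ascPochhammer ℚ (n + i) j]
  push_cast
  ring_nf

/-- **Lemma 5.4.** The determinant of the Pascal-rhombus matrix
`(i,j) ↦ (n+i+j).choose (k+j)` of size `(l+1) × (l+1)`. -/
theorem pascal_rhombus_det (n k l : ℕ) (hk : k ≤ n) :
    (Matrix.of fun i j : Fin (l + 1) =>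
        (Nat.choose (n + (i : ℕ) + (j : ℕ)) (k + (j : ℕ)) : ℚ)).det =
      ((∏ m ∈ Finset.range (l + 1), (Nat.factorial (n + m) : ℚ)) *
        ∏ m ∈ Finset.range (l + 1), (Nat.factorial m : ℚ)) /
      ((∏ m ∈ Finset.range (l + 1), (Nat.factorial (k + m) : ℚ)) *
        ∏ m ∈ Finset.range (l + 1), (Nat.factorial (n - k + m) : ℚ)) := by
  have hchoose : (Matrix.of fun i j : Fin (l + 1) =>
        (Nat.choose (n + (i : ℕ) + (j : ℕ)) (k + (j : ℕ)) : ℚ)) =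
      Matrix.of fun i j : Fin (l + 1) => (Nat.factorial (k + (j : ℕ)) : ℚ)⁻¹ *
        (Matrix.of fun i j : Fin (l + 1) => (Nat.factorial (n - k + (i : ℕ)) : ℚ)⁻¹ *
          (Matrix.of fun i j : Fin (l + 1) =>
            (Nat.factorial (n + (i : ℕ) + (j : ℕ)) : ℚ)) i j) i j := by
    ext i j
    simp only [Matrix.of_apply]
    rw [Nat.cast_choose ℚ (by omega : k + (j : ℕ) ≤ n + i + j),
      show n + (i : ℕ) + j - (k + j) = n - k + i by omega]
    field_simp
  rw [hchoose, Matrix.det_mul_row, Matrix.det_mul_column, det_factorial_add_add,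
    Fin.prod_univ_eq_prod_range (fun m => (Nat.factorial (k + m) : ℚ)⁻¹),
    Fin.prod_univ_eq_prod_range (fun m => (Nat.factorial (n - k + m) : ℚ)⁻¹),
    Finset.prod_inv_distrib, Finset.prod_inv_distrib, div_eq_mul_inv, mul_inv]
  ring
end

section
/- Let $p, r \geq 0$ and $q \geq 1$ be integers. The determinant of the $q \times q$ matrix whose $(i,j)$ entry (for $0 \leq i, j \leq q-1$) is the extended binomial coefficient $\binom{p+r}{p+i-j}$ equals $\dfrac{\left(\prod_{m=0}^{q-1}(p+r+m)!\right)\left(\prod_{m=0}^{q-1} m!\right)}{\left(\prod_{m=0}^{q-1}(p+m)!\right)\left(\prod_{m=0}^{q-1}(r+m)!\right)}$; in particular this determinant is positive. -/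
open Finset

/-- The extended binomial coefficient: `0` whenever the lower index is negative
(and, via `Nat.choose`, also `0` when it exceeds the upper index). -/
def ebinom (n : ℕ) (m : ℤ) : ℕ := if 0 ≤ m then n.choose m.toNat else 0

/-- The Chu–Vandermonde identity for extended binomial coefficients. -/
lemma sum_ebinom_mul_choose (n m k q : ℕ) (hk : k < q) :
    ∑ j ∈ range q, ebinom n ((m : ℤ) - j) * k.choose j = (n + k).choose m := by
  rw [add_comm n k, Nat.add_choose_eq,
    Finset.Nat.sum_antidiagonal_eq_sum_range_succ (fun a b => k.choose a * n.choose b)]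
  have hleft : ∑ j ∈ range q, ebinom n ((m : ℤ) - j) * k.choose j =
      ∑ j ∈ range (q + m), ebinom n ((m : ℤ) - j) * k.choose j := by
    refine sum_subset (range_mono (by omega)) fun j _ hj => ?_
    rw [Nat.choose_eq_zero_of_lt (by simp at hj; omega), mul_zero]
  have hright : ∑ j ∈ range (m + 1), ebinom n ((m : ℤ) - j) * k.choose j =
      ∑ j ∈ range (q + m), ebinom n ((m : ℤ) - j) * k.choose j := by
    refine sum_subset (range_mono (by omega)) fun j _ hj => ?_
    rw [ebinom, if_neg (by simp at hj; omega), zero_mul]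
  rw [hleft, ← hright]
  refine sum_congr rfl fun j hj => ?_
  have hjm : j ≤ m := by simp at hj; omega
  rw [ebinom, if_pos (by omega), mul_comm, show ((m : ℤ) - j).toNat = m - j by omega]

lemma det_choose_eq_one (q : ℕ) :
    (Matrix.of fun j k : Fin q => (((k : ℕ).choose j : ℕ) : ℚ)).det = 1 := by
  rw [Matrix.det_of_isUpperTriangular]
  · simp
  · intro i j hij
    simpa using Nat.choose_eq_zero_of_lt (show (j : ℕ) < i from hij)

lemma det_descFactorial (r q : ℕ) :
    (Matrix.of fun k i : Fin q => (((r + k : ℕ).descFactorial i : ℕ) : ℚ)).det =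
      ∏ m ∈ range q, (Nat.factorial m : ℚ) := by
  have h := Matrix.det_eval_matrixOfPolynomials_eq_det_vandermonde
    (fun k : Fin q => ((k : ℕ) : ℚ) + r) (fun i => descPochhammer ℚ i)
    (fun i => descPochhammer_natDegree ℚ i) (fun i => monic_descPochhammer ℚ i)
  rw [Matrix.det_vandermonde_add] at h
  have hv : (Matrix.vandermonde fun k : Fin q => ((k : ℕ) : ℚ)).det =
      ∏ m ∈ range q, (Nat.factorial m : ℚ) := by
    cases q with
    | zero => simp
    | succ n =>
      rw [Matrix.det_vandermonde_id_eq_superFactorial, ← Nat.prod_range_succ_factorial]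
      push_cast
      rfl
  rw [← hv, h]
  congr 1
  ext k i
  simp only [Matrix.of_apply]
  rw [← descPochhammer_eval_eq_descFactorial]
  push_cast
  rw [add_comm]

lemma cast_choose_eq_descFactorial (p r i k : ℕ) :
    (((p + r + k).choose (p + i) : ℕ) : ℚ) =
      (Nat.factorial (p + i) : ℚ)⁻¹ *
        ((Nat.factorial (p + r + k) : ℚ) / Nat.factorial (r + k) *
          ((r + k).descFactorial i : ℕ)) := by
  rcases le_or_gt i (r + k) with h | h
  · rw [Nat.cast_choose ℚ (by omega), show p + r + k - (p + i) = r + k - i by omega,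
      ← Nat.factorial_mul_descFactorial h]
    have h0 : ((r + k).descFactorial i : ℚ) ≠ 0 := by
      exact_mod_cast fun h' => (Nat.descFactorial_eq_zero_iff_lt.1 h').not_ge h
    push_cast
    field_simp
  · rw [Nat.choose_eq_zero_of_lt (by omega), Nat.descFactorial_of_lt h]
    simp

lemma det_choose_add (p r q : ℕ) :
    (Matrix.of fun i k : Fin q => (((p + r + k : ℕ).choose (p + i) : ℕ) : ℚ)).det =
      ((∏ m ∈ range q, (Nat.factorial (p + r + m) : ℚ)) *
        ∏ m ∈ range q, (Nat.factorial m : ℚ)) /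
      ((∏ m ∈ range q, (Nat.factorial (p + m) : ℚ)) *
        ∏ m ∈ range q, (Nat.factorial (r + m) : ℚ)) := by
  simp_rw [cast_choose_eq_descFactorial]
  have hcol := Matrix.det_mul_column (fun i : Fin q => (Nat.factorial (p + i) : ℚ)⁻¹)
    (Matrix.of fun i k : Fin q => (Nat.factorial (p + r + k) : ℚ) / Nat.factorial (r + k) *
          ((r + k : ℕ).descFactorial i : ℕ))
  have hrow := Matrix.det_mul_row
    (fun k : Fin q => (Nat.factorial (p + r + k) : ℚ) / Nat.factorial (r + k))
    (Matrix.of fun k i : Fin q => (((r + k : ℕ).descFactorial i : ℕ) : ℚ)).transpose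
  simp only [Matrix.of_apply, Matrix.transpose_apply] at hcol hrow
  rw [hcol, hrow, Matrix.det_transpose, det_descFactorial,
    Fin.prod_univ_eq_prod_range (fun m => (Nat.factorial (p + m) : ℚ)⁻¹),
    Fin.prod_univ_eq_prod_range
      (fun m => (Nat.factorial (p + r + m) : ℚ) / Nat.factorial (r + m)),
    prod_inv_distrib, prod_div_distrib]
  ring

lemma det_ebinom_eq_det_choose (p r q : ℕ) :
    (Matrix.of fun i j : Fin q =>
        (ebinom (p + r) ((p : ℤ) + (i : ℕ) - (j : ℕ)) : ℚ)).det =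
      (Matrix.of fun i k : Fin q => (((p + r + k : ℕ).choose (p + i) : ℕ) : ℚ)).det := by
  rw [← mul_one (Matrix.det _), ← det_choose_eq_one q, ← Matrix.det_mul]
  congr 1
  ext i k
  simp only [Matrix.mul_apply, Matrix.of_apply]
  rw [← sum_ebinom_mul_choose (p + r) (p + i) k q k.isLt,
    ← Fin.sum_univ_eq_sum_range
      (fun j => ebinom (p + r) (((p + i : ℕ) : ℤ) - j) * (k : ℕ).choose j)]
  push_cast
  rfl

/-- **Lemma 5.3.** The band determinant of extended binomial coefficients
`(i,j) ↦ C(p+r, p+i-j)` of size `q × q` equals the explicit ratio of factorials;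
in particular it is positive. -/
theorem band_binomial_det (p r q : ℕ) (hq : 1 ≤ q) :
    (Matrix.of fun i j : Fin q =>
        (ebinom (p + r) ((p : ℤ) + (i : ℕ) - (j : ℕ)) : ℚ)).det =
      ((∏ m ∈ Finset.range q, (Nat.factorial (p + r + m) : ℚ)) *
        ∏ m ∈ Finset.range q, (Nat.factorial m : ℚ)) /
      ((∏ m ∈ Finset.range q, (Nat.factorial (p + m) : ℚ)) *
        ∏ m ∈ Finset.range q, (Nat.factorial (r + m) : ℚ)) ∧
    0 < (Matrix.of fun i j : Fin q =>
        (ebinom (p + r) ((p : ℤ) + (i : ℕ) - (j : ℕ)) : ℚ)).det := by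
  rw [det_ebinom_eq_det_choose, det_choose_add]
  exact ⟨rfl, by positivity⟩
end

section
/- Let $p, r \geq 0$ and $q \geq 1$ be integers. Then $\det\left(\binom{p+r}{p+i-j}\right)_{0 \leq i,j \leq q-1} = \det\left(\binom{p+r+i+j}{p+j}\right)_{0 \leq i,j \leq q-1}$, i.e., the $q \times q$ band determinant of binomial coefficients equals the $q \times q$ Pascal-rhombus determinant $\Diamond(p+r,\, p,\, q-1)$. -/
theorem ebinom_natCast (n k : ℕ) : ebinom n (k : ℤ) = n.choose k := by
  simp [ebinom]

theorem ebinom_succ (n : ℕ) (m : ℤ) : ebinom (n + 1) m = ebinom n m + ebinom n (m - 1) := by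
  rcases lt_trichotomy m 0 with h | rfl | h
  · simp [ebinom, show ¬ 0 ≤ m by omega, show ¬ 1 ≤ m by omega]
  · simp [ebinom]
  · obtain ⟨k, rfl⟩ : ∃ k : ℕ, m = ((k + 1 : ℕ) : ℤ) := ⟨(m - 1).toNat, by omega⟩
    rw [show ((k + 1 : ℕ) : ℤ) - 1 = (k : ℤ) by push_cast; ring]
    simp only [ebinom_natCast, Nat.choose_succ_succ', add_comm]

/-- Vandermonde's identity for the extended binomial coefficient. -/
theorem ebinom_add (n i : ℕ) (m : ℤ) :
    ebinom (n + i) m = ∑ k ∈ Finset.range (i + 1), i.choose k * ebinom n (m - k) := by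
  induction i generalizing m with
  | zero => simp
  | succ i ih =>
    have h := Finset.sum_choose_succ_mul (fun k _ => ebinom n (m - k)) i
    simp only [Nat.cast_id] at h
    rw [h, ← add_assoc, ebinom_succ, ih, ih]
    simp only [Nat.cast_add, Nat.cast_one, sub_sub, add_comm]

/-- Vandermonde's identity with the lower index shifted along with the upper one. -/
theorem ebinom_add_add (n j : ℕ) (m : ℤ) :
    ebinom (n + j) (m + j) = ∑ k ∈ Finset.range (j + 1), j.choose k * ebinom n (m + k) := by
  rw [ebinom_add, ← Finset.sum_range_reflect]
  refine Finset.sum_congr rfl fun k hk => ?_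
  have hk : k ≤ j := Nat.lt_succ_iff.mp (Finset.mem_range.mp hk)
  rw [Nat.add_sub_cancel, Nat.choose_symm hk]
  congr 2
  omega

theorem sum_fin_choose_mul {R : Type*} [Semiring R] {q i : ℕ} (hi : i < q) (f : ℕ → R) :
    ∑ k : Fin q, (i.choose k : R) * f k =
      ∑ k ∈ Finset.range (i + 1), (i.choose k : R) * f k := by
  rw [Fin.sum_univ_eq_sum_range (fun k => (i.choose k : R) * f k)]
  refine (Finset.sum_subset (Finset.range_mono hi) fun k _ hk => ?_).symm
  rw [Nat.choose_eq_zero_of_lt (by simpa using hk), Nat.cast_zero, zero_mul]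

/-- The lower triangular Pascal matrix. -/
def pascalMatrix (q : ℕ) : Matrix (Fin q) (Fin q) ℤ :=
  Matrix.of fun i k => ((i : ℕ).choose k : ℤ)

theorem det_pascalMatrix (q : ℕ) : (pascalMatrix q).det = 1 := by
  rw [Matrix.det_of_isLowerTriangular]
  · simp [pascalMatrix]
  · intro i j hij
    have hij : (i : ℕ) < j := hij
    simp [pascalMatrix, Nat.choose_eq_zero_of_lt hij]

/-- The Pascal-rhombus matrix is obtained from the transposed band matrix by unimodular
row and column operations. -/
theorem rhombus_eq_pascal_mul_band_mul_pascal (n p q : ℕ) :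
    (Matrix.of fun i j : Fin q =>
        (Nat.choose (n + (i : ℕ) + (j : ℕ)) (p + (j : ℕ)) : ℤ)) =
      pascalMatrix q * ((Matrix.of fun i j : Fin q =>
        (ebinom n ((p : ℤ) + (i : ℕ) - (j : ℕ)) : ℤ)).transpose * (pascalMatrix q).transpose) := by
  ext i j
  have hcol (k : ℕ) : ∑ m : Fin q, (ebinom n ((p : ℤ) + (m : ℕ) - k) : ℤ) * ((j : ℕ).choose m : ℤ)
      = ebinom (n + j) ((p : ℤ) + (j : ℕ) - k) := by
    rw [add_sub_right_comm, ebinom_add_add, Nat.cast_sum]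
    simp only [Nat.cast_mul, mul_comm, add_sub_right_comm]
    simpa only [mul_comm] using
      sum_fin_choose_mul j.isLt fun m => (ebinom n ((p : ℤ) - k + m) : ℤ)
  simp only [Matrix.mul_apply, Matrix.transpose_apply, Matrix.of_apply, pascalMatrix, hcol]
  rw [sum_fin_choose_mul i.isLt fun k => (ebinom (n + j) ((p : ℤ) + (j : ℕ) - k) : ℤ),
    add_right_comm, ← ebinom_natCast, ebinom_add]
  push_cast
  rfl

/-- The `q × q` band determinant of binomial coefficients equals the
`q × q` Pascal-rhombus determinant `◇(p+r, p, q-1)`. -/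
theorem band_det_eq_rhombus_det (p r q : ℕ) (hq : 1 ≤ q) :
    (Matrix.of fun i j : Fin q =>
        (ebinom (p + r) ((p : ℤ) + (i : ℕ) - (j : ℕ)) : ℤ)).det =
      (Matrix.of fun i j : Fin q =>
        (Nat.choose (p + r + (i : ℕ) + (j : ℕ)) (p + (j : ℕ)) : ℤ)).det := by
  rw [rhombus_eq_pascal_mul_band_mul_pascal, Matrix.det_mul, Matrix.det_mul,
    Matrix.det_transpose, Matrix.det_transpose, det_pascalMatrix, one_mul, mul_one]
end

section
/- Let $p, r \geq 0$ and $q \geq 1$ be integers and set $n = p+q+r$. Then $\det\left(\binom{p+r}{p+i-j}\right)_{0 \leq i,j \leq q-1} = \det\left(\binom{n-1-i}{p+q-1-j}\right)_{0 \leq i,j \leq q-1}$. -/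
theorem ebinom_natCast_sub (N m s : ℕ) :
    ebinom N ((m : ℤ) - s) = if s ≤ m then N.choose (m - s) else 0 := by
  have h : ((m : ℤ) - s).toNat = m - s := by omega
  simp [ebinom, h]

/-- Vandermonde's identity with the summation range decoupled from the lower index. -/
theorem sum_range_choose_mul_ebinom {k q : ℕ} (hk : k < q) (N m : ℕ) :
    ∑ s ∈ Finset.range q, k.choose s * ebinom N ((m : ℤ) - s) = (N + k).choose m := by
  have extend_left : ∑ s ∈ Finset.range q, k.choose s * ebinom N ((m : ℤ) - s) =
      ∑ s ∈ Finset.range (q + (m + 1)), k.choose s * ebinom N ((m : ℤ) - s) := by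
    refine Finset.sum_subset (Finset.range_mono (by omega)) fun s _ hs => ?_
    rw [Finset.mem_range] at hs
    rw [Nat.choose_eq_zero_of_lt (by omega), zero_mul]
  have extend_right : ∑ s ∈ Finset.range (m + 1), k.choose s * ebinom N ((m : ℤ) - s) =
      ∑ s ∈ Finset.range (q + (m + 1)), k.choose s * ebinom N ((m : ℤ) - s) := by
    refine Finset.sum_subset (Finset.range_mono (by omega)) fun s _ hs => ?_
    rw [Finset.mem_range] at hs
    rw [ebinom_natCast_sub, if_neg (by omega), mul_zero]
  rw [extend_left, ← extend_right, Nat.add_comm N k, Nat.add_choose_eq,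
    Finset.Nat.sum_antidiagonal_eq_sum_range_succ fun a b => k.choose a * N.choose b]
  refine Finset.sum_congr rfl fun s hs => ?_
  rw [Finset.mem_range] at hs
  rw [ebinom_natCast_sub, if_pos (by omega)]

/-- The upper unitriangular matrix recording the accumulated row additions. -/
def rowAddMatrix (q : ℕ) : Matrix (Fin q) (Fin q) ℤ :=
  Matrix.of fun i l => ((i.rev : ℕ).choose (l.rev : ℕ) : ℤ)

theorem det_rowAddMatrix (q : ℕ) : (rowAddMatrix q).det = 1 := by
  rw [Matrix.det_of_isUpperTriangular]
  · simp [rowAddMatrix]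
  · intro i l hil
    have h : l < i := hil
    simp only [rowAddMatrix, Matrix.of_apply]
    rw [Nat.choose_eq_zero_of_lt (Fin.rev_lt_rev.mpr h), Nat.cast_zero]

/-- The intermediate determinant identity of Lemma 5.3, obtained by repeated
row additions and the Pascal recurrence: with `n = p+q+r`, the band determinant
equals `det ((i,j) ↦ C(n-1-i, p+q-1-j))`. -/
theorem band_det_row_reduction (p q r : ℕ) (hq : 1 ≤ q) (n : ℕ) (hn : n = p + q + r) :
    (Matrix.of fun i j : Fin q =>
        (ebinom (p + r) ((p : ℤ) + (i : ℕ) - (j : ℕ)) : ℤ)).det =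
      (Matrix.of fun i j : Fin q =>
        (Nat.choose (n - 1 - (i : ℕ)) (p + q - 1 - (j : ℕ)) : ℤ)).det := by
  rw [← one_mul (Matrix.det _), ← det_rowAddMatrix q, ← Matrix.det_mul]
  congr 1
  ext i j
  have hn' : n - 1 - (i : ℕ) = p + r + (i.rev : ℕ) := by rw [Fin.val_rev]; omega
  simp only [Matrix.mul_apply, rowAddMatrix, Matrix.of_apply]
  rw [hn', ← sum_range_choose_mul_ebinom i.rev.isLt, Finset.sum_range, ← Equiv.sum_comp Fin.revPerm]
  push_cast
  refine Finset.sum_congr rfl fun l _ => ?_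
  have hl : (p : ℤ) + (l.rev : ℕ) - (j : ℕ) = ((p + q - 1 - (j : ℕ) : ℕ) : ℤ) - (l : ℕ) := by
    rw [Fin.val_rev]; omega
  rw [Fin.revPerm_apply, Fin.rev_rev, hl]
end

section
/- Let $n, l \geq 0$ be integers. The determinant of the $(l+1) \times (l+1)$ matrix whose $(i,j)$ entry (for $0 \leq i, j \leq l$) is the rising product $(n+j+1)(n+j+2)\cdots(n+j+i)$ (equal to $1$ when $i = 0$) equals $\prod_{m=0}^{l} m! = 1! \, 2! \cdots l!$. -/
open Finset

/-- The rising factorial polynomial evaluates to a product of consecutive shifts. -/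
lemma ascPochhammer_eval_eq_prod_range_add {R : Type*} [CommSemiring R] (k : ℕ) (r : R) :
    (ascPochhammer R k).eval r = ∏ m ∈ Finset.range k, (r + m) := by
  induction k with
  | zero => simp
  | succ k ih => rw [ascPochhammer_succ_eval, ih, Finset.prod_range_succ]

/-- The determinant of the matrix of rising products
`(i,j) ↦ (n+j+1)(n+j+2)⋯(n+j+i)` of size `(l+1) × (l+1)` equals `1! 2! ⋯ l!`. -/
theorem rising_product_det (n l : ℕ) :
    (Matrix.of fun i j : Fin (l + 1) =>
        ∏ m ∈ Finset.range (i : ℕ), ((n : ℤ) + (j : ℕ) + 1 + m)).det =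
      ∏ m ∈ Finset.range (l + 1), (Nat.factorial m : ℤ) := by
  have hpoly := Matrix.det_eval_matrixOfPolynomials_eq_det_vandermonde
    (fun j : Fin (l + 1) => ((j : ℕ) : ℤ) + ((n : ℤ) + 1)) (fun i => ascPochhammer ℤ i)
    (fun i => ascPochhammer_natDegree ℤ i) (fun i => monic_ascPochhammer ℤ i)
  rw [Matrix.det_vandermonde_add, Matrix.det_vandermonde_id_eq_superFactorial,
    ← Nat.prod_range_succ_factorial, Nat.cast_prod] at hpoly
  rw [hpoly, ← Matrix.det_transpose]
  congr 1
  ext i j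
  simp only [Matrix.transpose_apply, Matrix.of_apply, ascPochhammer_eval_eq_prod_range_add]
  exact Finset.prod_congr rfl fun m _ => by ring
end

section
/- Fix an integer $n \geq 3$. For $t \in \mathbb{R}$ and $1 \leq m \leq n$ let $u_m(t) \in \mathbb{R}^n$ be the vector whose $i$-th entry is $\binom{n-m}{i-1}\, t^{\,n-m-i+1}$ if $1 \leq i \leq n-m+1$ and $0$ otherwise. Let $a, b, c \in \mathbb{R}$ be pairwise distinct, and for nonnegative integers $d_1, d_2, d_3$ with $d_1+d_2+d_3 = n$ let $\Delta(d_1,d_2,d_3)$ be the determinant of the $n \times n$ matrix with columns $u_1(a),\dots,u_{d_1}(a), u_1(b),\dots,u_{d_2}(b), u_1(c),\dots,u_{d_3}(c)$. Then (i) $\Delta(d_1,d_2,d_3) \neq 0$ for all such $(d_1,d_2,d_3)$, and (ii) for all integers $p, q, r \geq 1$ with $p+q+r = n$, $\Delta(p{+}1,q,r{-}1)\,\Delta(p,q{-}1,r{+}1)\,\Delta(p{-}1,q{+}1,r) = \Delta(p{-}1,q,r{+}1)\,\Delta(p,q{+}1,r{-}1)\,\Delta(p{+}1,q{-}1,r)$;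 that is, every $(p,q,r)$-th triple ratio of the Veronese flags at $a$, $b$, $c$ equals $1$. -/
/-- `veroVec n t m` is the vector `u_{m+1}(t) ∈ ℝ^n`: the coefficient vector of the
polynomial `(tX+Y)^{n-(m+1)} X^m` in the basis `X^{n-1}, X^{n-2}Y, …, Y^{n-1}`.
Its `i`-th entry (`0`-indexed) is `C(n-1-m, i) t^{n-1-m-i}` for `i ≤ n-1-m`, and `0`
otherwise. Here `m` is the `0`-indexed version of the paper's index `m ∈ {1,…,n}`. -/
def veroVec (n : ℕ) (t : ℝ) (m : ℕ) : Fin n → ℝ := fun i =>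
  if (i : ℕ) ≤ n - 1 - m then
    (Nat.choose (n - 1 - m) (i : ℕ) : ℝ) * t ^ (n - 1 - m - (i : ℕ))
  else 0

/-- `veroDelta n a b c d₁ d₂ d₃` is the determinant `Δ(d₁,d₂,d₃)` of the `n × n`
matrix with columns `u_1(a),…,u_{d₁}(a), u_1(b),…,u_{d₂}(b), u_1(c),…,u_{d₃}(c)`
(meaningful when `d₁ + d₂ + d₃ = n`). -/
def veroDelta (n : ℕ) (a b c : ℝ) (d₁ d₂ d₃ : ℕ) : ℝ :=
  (Matrix.of fun i j : Fin n =>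
    if (j : ℕ) < d₁ then veroVec n a (j : ℕ) i
    else if (j : ℕ) < d₁ + d₂ then veroVec n b ((j : ℕ) - d₁) i
    else veroVec n c ((j : ℕ) - d₁ - d₂) i).det

open Polynomial in
/-- The value at `t` of the `m`-th Hasse derivative of a polynomial divisible by `(X - t) ^ k`. -/
lemma taylor_coeff_X_sub_C_pow_mul (t : ℝ) (k m : ℕ) (Q : ℝ[X]) (h : m ≤ k) :
    (taylor t ((X - C t) ^ k * Q)).coeff m = if m = k then Q.eval t else 0 := by
  have hX : taylor t ((X - C t) ^ k * Q) = X ^ k * taylor t Q := by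
    simp [taylor_mul, taylor_pow]
  rw [hX, coeff_X_pow_mul']
  rcases h.lt_or_eq with h | rfl
  · rw [if_neg (by omega), if_neg (by omega)]
  · simp [taylor_coeff_zero]

/-- The node attached to the `j`-th column of the matrix defining `veroDelta`. -/
def columnNode (a b c : ℝ) (d₁ d₂ j : ℕ) : ℝ :=
  if j < d₁ then a else if j < d₁ + d₂ then b else c

/-- The position within its block of the `j`-th column of the matrix defining `veroDelta`. -/
def columnOrder (d₁ d₂ j : ℕ) : ℕ :=
  if j < d₁ then j else if j < d₁ + d₂ then j - d₁ else j - d₁ - d₂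

lemma columnOrder_le (d₁ d₂ j : ℕ) : columnOrder d₁ d₂ j ≤ j := by
  unfold columnOrder; split_ifs <;> omega

/-- The confluent Vandermonde matrix with nodes `a`, `b`, `c` and multiplicities
`d₁`, `d₂`, `n - d₁ - d₂`. -/
def confluentVandermonde (n : ℕ) (a b c : ℝ) (d₁ d₂ : ℕ) : Matrix (Fin n) (Fin n) ℝ :=
  Matrix.of fun i j => columnNode a b c d₁ d₂ j ^ ((i : ℕ) - columnOrder d₁ d₂ j) *
    ((i : ℕ).choose (columnOrder d₁ d₂ j) : ℝ)

open Polynomial in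
/-- The Newton basis attached to the nodes `a`, `b`, `c` with multiplicities. -/
noncomputable def newtonPoly (a b c : ℝ) (d₁ d₂ j : ℕ) : ℝ[X] :=
  (X - C a) ^ min j d₁ * (X - C b) ^ min (j - d₁) d₂ * (X - C c) ^ (j - d₁ - d₂)

lemma newtonPoly_monic (a b c : ℝ) (d₁ d₂ j : ℕ) : (newtonPoly a b c d₁ d₂ j).Monic :=
  (((Polynomial.monic_X_sub_C a).pow _).mul ((Polynomial.monic_X_sub_C b).pow _)).mul
    ((Polynomial.monic_X_sub_C c).pow _)

lemma newtonPoly_natDegree (a b c : ℝ) (d₁ d₂ j : ℕ) :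
    (newtonPoly a b c d₁ d₂ j).natDegree = j := by
  have ha := (Polynomial.monic_X_sub_C a).pow (min j d₁)
  have hb := (Polynomial.monic_X_sub_C b).pow (min (j - d₁) d₂)
  have hc := (Polynomial.monic_X_sub_C c).pow (j - d₁ - d₂)
  rw [newtonPoly, (ha.mul hb).natDegree_mul hc, ha.natDegree_mul hb]
  simp only [Polynomial.natDegree_pow, Polynomial.natDegree_X_sub_C]
  omega

open Polynomial in
/-- The Hasse derivatives at the nodes are triangular on the Newton basis. -/
lemma taylor_newtonPoly_coeff (a b c : ℝ) (d₁ d₂ i j : ℕ) (hij : j ≤ i) :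
    (taylor (columnNode a b c d₁ d₂ j) (newtonPoly a b c d₁ d₂ i)).coeff
        (columnOrder d₁ d₂ j) =
      if j = i then
        if j < d₁ then 1 else if j < d₁ + d₂ then (b - a) ^ d₁
        else (c - a) ^ d₁ * (c - b) ^ d₂
      else 0 := by
  unfold columnNode columnOrder newtonPoly
  by_cases h₁ : j < d₁
  · simp only [if_pos h₁]
    rw [mul_assoc, taylor_coeff_X_sub_C_pow_mul _ _ _ _ (by omega)]
    refine if_ctx_congr (by omega) (fun h => ?_) fun _ => rfl
    simp [show i - d₁ = 0 by omega]
  by_cases h₂ : j < d₁ + d₂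
  · simp only [if_neg h₁, if_pos h₂]
    rw [mul_comm ((X - C a) ^ _), mul_assoc, taylor_coeff_X_sub_C_pow_mul _ _ _ _ (by omega)]
    refine if_ctx_congr (by omega) (fun h => ?_) fun _ => rfl
    simp [show i - d₁ - d₂ = 0 by omega, show min i d₁ = d₁ by omega]
  · simp only [if_neg h₁, if_neg h₂]
    rw [mul_comm, taylor_coeff_X_sub_C_pow_mul _ _ _ _ (by omega)]
    refine if_ctx_congr (by omega) (fun h => ?_) fun _ => rfl
    simp [show min (i - d₁) d₂ = d₂ by omega, show min i d₁ = d₁ by omega]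

open Polynomial in
lemma newtonPoly_coeff_mul_confluentVandermonde (n : ℕ) (a b c : ℝ) (d₁ d₂ : ℕ) :
    (Matrix.of fun i m : Fin n => (newtonPoly a b c d₁ d₂ i).coeff m) *
        confluentVandermonde n a b c d₁ d₂ =
      Matrix.of fun i j : Fin n => (taylor (columnNode a b c d₁ d₂ j)
        (newtonPoly a b c d₁ d₂ i)).coeff (columnOrder d₁ d₂ j) := by
  ext i j
  have hdeg : (newtonPoly a b c d₁ d₂ i).natDegree < n := by
    rw [newtonPoly_natDegree]; exact i.isLt
  simp only [Matrix.mul_apply, Matrix.of_apply, confluentVandermonde]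
  conv_rhs => rw [(newtonPoly a b c d₁ d₂ i).as_sum_range' n hdeg]
  rw [Fin.sum_univ_eq_sum_range (fun m => (newtonPoly a b c d₁ d₂ i).coeff m *
    (columnNode a b c d₁ d₂ j ^ (m - columnOrder d₁ d₂ j) *
      (m.choose (columnOrder d₁ d₂ j) : ℝ))) n, map_sum, finsetSum_coeff]
  refine Finset.sum_congr rfl fun m _ => ?_
  rw [taylor_monomial, coeff_C_mul, coeff_X_add_C_pow]

lemma det_confluentVandermonde (d₁ d₂ d₃ : ℕ) (a b c : ℝ) :
    (confluentVandermonde (d₁ + d₂ + d₃) a b c d₁ d₂).det =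
      (b - a) ^ (d₁ * d₂) * (c - a) ^ (d₁ * d₃) * (c - b) ^ (d₂ * d₃) := by
  have hmul := congrArg Matrix.det
    (newtonPoly_coeff_mul_confluentVandermonde (d₁ + d₂ + d₃) a b c d₁ d₂)
  have hcoeff : (Matrix.of fun i m : Fin (d₁ + d₂ + d₃) =>
      (newtonPoly a b c d₁ d₂ i).coeff m).det = 1 := by
    rw [Matrix.det_of_isLowerTriangular]
    · refine Finset.prod_eq_one fun i _ => ?_
      have h := (newtonPoly_monic a b c d₁ d₂ i).coeff_natDegree
      rwa [newtonPoly_natDegree] at h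
    · intro i m him
      have hlt : (newtonPoly a b c d₁ d₂ i).natDegree < m := by
        rw [newtonPoly_natDegree]
        exact him
      exact Polynomial.coeff_eq_zero_of_natDegree_lt hlt
  rw [Matrix.det_mul, hcoeff, one_mul] at hmul
  rw [hmul, Matrix.det_of_isUpperTriangular]
  · simp only [Matrix.of_apply, taylor_newtonPoly_coeff _ _ _ _ _ _ _ le_rfl, if_true]
    rw [Fin.prod_univ_eq_prod_range (fun j => if j < d₁ then (1 : ℝ) else
      if j < d₁ + d₂ then (b - a) ^ d₁ else (c - a) ^ d₁ * (c - b) ^ d₂),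
      Finset.prod_range_add, Finset.prod_range_add]
    rw [Finset.prod_congr rfl (g := fun _ => (1 : ℝ)),
      Finset.prod_congr (s₁ := Finset.range d₂) rfl (g := fun _ => (b - a) ^ d₁),
      Finset.prod_congr (s₁ := Finset.range d₃) rfl
        (g := fun _ => (c - a) ^ d₁ * (c - b) ^ d₂)]
    · simp only [Finset.prod_const, Finset.card_range]
      ring
    · intro j _
      rw [if_neg (by omega), if_neg (by omega)]
    · intro j hj
      have := Finset.mem_range.1 hj
      rw [if_neg (by omega), if_pos (by omega)]
    · intro j hj
      rw [if_pos (Finset.mem_range.1 hj)]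
  · intro i j hij
    have hlt : (j : ℕ) < i := hij
    rw [Matrix.of_apply, taylor_newtonPoly_coeff _ _ _ _ _ _ _ hlt.le, if_neg hlt.ne]

lemma veroVec_mul_choose (n : ℕ) (t : ℝ) (k : ℕ) (i : Fin n) (hk : k < n) :
    veroVec n t k i * ((n - 1).choose k : ℝ) =
      ((n - 1).choose i : ℝ) *
        (t ^ ((i.rev : ℕ) - k) * ((i.rev : ℕ).choose k : ℝ)) := by
  have hi := i.isLt
  have hrev : (i.rev : ℕ) = n - 1 - i := by rw [Fin.val_rev]; omega
  rw [hrev, veroVec]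
  split_ifs with h
  · have hchoose : (n - 1 - k).choose i * (n - 1).choose k =
        (n - 1).choose i * (n - 1 - i).choose k := by
      have h₁ := Nat.choose_mul (n := n - 1) (k := i + k) (s := k) (by omega)
      have h₂ := Nat.choose_mul (n := n - 1) (k := i + k) (s := i) (by omega)
      rw [Nat.add_sub_cancel] at h₁
      rw [Nat.add_sub_cancel_left] at h₂
      rw [mul_comm, ← h₁, ← h₂, Nat.choose_symm_add]
    have hcast : ((n - 1 - k).choose i : ℝ) * ((n - 1).choose k : ℝ) =
        ((n - 1).choose i : ℝ) * ((n - 1 - i).choose k : ℝ) := by exact_mod_cast hchoose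
    rw [show n - 1 - (i : ℕ) - k = n - 1 - k - i by omega]
    linear_combination t ^ (n - 1 - k - (i : ℕ)) * hcast
  · rw [Nat.choose_eq_zero_of_lt (n := n - 1 - i) (k := k) (by omega)]
    simp

/-- The normalising factor of a block of `d` columns. -/
def blockFactor (n d : ℕ) : ℝ := ∏ k ∈ Finset.range d, ((n - 1).choose k : ℝ)

lemma blockFactor_ne_zero (n d : ℕ) (h : d ≤ n) : blockFactor n d ≠ 0 := by
  refine Finset.prod_ne_zero_iff.2 fun k hk => ?_
  have := Finset.mem_range.1 hk
  exact_mod_cast (Nat.choose_pos (show k ≤ n - 1 by omega)).ne'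

lemma veroDelta_eq_det (n : ℕ) (a b c : ℝ) (d₁ d₂ d₃ : ℕ) :
    veroDelta n a b c d₁ d₂ d₃ = (Matrix.of fun i j : Fin n =>
      veroVec n (columnNode a b c d₁ d₂ j) (columnOrder d₁ d₂ j) i).det := by
  unfold veroDelta columnNode columnOrder
  congr 1
  ext i j
  simp only [Matrix.of_apply]
  split_ifs <;> rfl

lemma prod_choose_columnOrder (N d₁ d₂ d₃ : ℕ) :
    ∏ j : Fin (d₁ + d₂ + d₃), ((N - 1).choose (columnOrder d₁ d₂ j) : ℝ) =
      blockFactor N d₁ * blockFactor N d₂ * blockFactor N d₃ := by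
  rw [Fin.prod_univ_eq_prod_range (fun j => ((N - 1).choose (columnOrder d₁ d₂ j) : ℝ)),
    Finset.prod_range_add, Finset.prod_range_add]
  unfold blockFactor columnOrder
  congr 1
  · congr 1
    · refine Finset.prod_congr rfl fun j hj => ?_
      rw [if_pos (Finset.mem_range.1 hj)]
    · refine Finset.prod_congr rfl fun j hj => ?_
      have := Finset.mem_range.1 hj
      rw [if_neg (by omega), if_pos (by omega), Nat.add_sub_cancel_left]
  · refine Finset.prod_congr rfl fun j _ => ?_
    rw [if_neg (by omega), if_neg (by omega), show d₁ + d₂ + j - d₁ - d₂ = j by omega]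

/-- The closed formula for the determinants of the Veronese flags. -/
lemma veroDelta_mul_blockFactor (n : ℕ) (a b c : ℝ) (d₁ d₂ d₃ : ℕ) (h : d₁ + d₂ + d₃ = n) :
    veroDelta n a b c d₁ d₂ d₃ * (blockFactor n d₁ * blockFactor n d₂ * blockFactor n d₃) =
      blockFactor n n * ((Equiv.Perm.sign (Fin.revPerm (n := n)) : ℤ) : ℝ) *
        ((b - a) ^ (d₁ * d₂) * (c - a) ^ (d₁ * d₃) * (c - b) ^ (d₂ * d₃)) := by
  subst h
  rw [← det_confluentVandermonde, ← prod_choose_columnOrder, veroDelta_eq_det, mul_comm,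
    ← Matrix.det_mul_row, mul_assoc, ← Matrix.det_permute, blockFactor,
    ← Fin.prod_univ_eq_prod_range (fun k => ((d₁ + d₂ + d₃ - 1).choose k : ℝ)),
    ← Matrix.det_mul_column]
  congr 1
  ext i j
  have hj := (columnOrder_le d₁ d₂ j).trans_lt j.isLt
  simpa [confluentVandermonde, mul_comm] using
    veroVec_mul_choose _ (columnNode a b c d₁ d₂ j) _ i hj

/-- **Proposition 5.1.** For pairwise distinct `a, b, c ∈ ℝ`, the Veronese flags at
`a`, `b`, `c` form a generic triple (all the determinants `Δ(d₁,d₂,d₃)` are nonzero),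
and every `(p,q,r)`-th triple ratio equals `1`. -/
theorem veronese_triple_ratio_eq_one (n : ℕ) (hn : 3 ≤ n) (a b c : ℝ)
    (hab : a ≠ b) (hac : a ≠ c) (hbc : b ≠ c) :
    (∀ d₁ d₂ d₃ : ℕ, d₁ + d₂ + d₃ = n → veroDelta n a b c d₁ d₂ d₃ ≠ 0) ∧
    ∀ p q r : ℕ, 1 ≤ p → 1 ≤ q → 1 ≤ r → p + q + r = n →
      veroDelta n a b c (p + 1) q (r - 1) * veroDelta n a b c p (q - 1) (r + 1) *
          veroDelta n a b c (p - 1) (q + 1) r =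
        veroDelta n a b c (p - 1) q (r + 1) * veroDelta n a b c p (q + 1) (r - 1) *
          veroDelta n a b c (p + 1) (q - 1) r := by
  have hsign : ((Equiv.Perm.sign (Fin.revPerm (n := n)) : ℤ) : ℝ) ≠ 0 := by
    exact_mod_cast (Equiv.Perm.sign (Fin.revPerm (n := n))).ne_zero
  have hba := sub_ne_zero.2 hab.symm
  have hca := sub_ne_zero.2 hac.symm
  have hcb := sub_ne_zero.2 hbc.symm
  refine ⟨fun d₁ d₂ d₃ h h0 => ?_, fun p q r hp hq hr h => ?_⟩
  · have hformula := veroDelta_mul_blockFactor n a b c d₁ d₂ d₃ h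
    rw [h0, zero_mul] at hformula
    exact mul_ne_zero (mul_ne_zero (blockFactor_ne_zero n n le_rfl) hsign)
      (mul_ne_zero (mul_ne_zero (pow_ne_zero _ hba) (pow_ne_zero _ hca)) (pow_ne_zero _ hcb))
      hformula.symm
  · obtain ⟨p, rfl⟩ := Nat.exists_eq_add_of_le' hp
    obtain ⟨q, rfl⟩ := Nat.exists_eq_add_of_le' hq
    obtain ⟨r, rfl⟩ := Nat.exists_eq_add_of_le' hr
    simp only [Nat.add_sub_cancel]
    have e₁ := veroDelta_mul_blockFactor n a b c (p + 1 + 1) (q + 1) r (by omega)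
    have e₂ := veroDelta_mul_blockFactor n a b c (p + 1) q (r + 1 + 1) (by omega)
    have e₃ := veroDelta_mul_blockFactor n a b c p (q + 1 + 1) (r + 1) (by omega)
    have e₄ := veroDelta_mul_blockFactor n a b c p (q + 1) (r + 1 + 1) (by omega)
    have e₅ := veroDelta_mul_blockFactor n a b c (p + 1) (q + 1 + 1) r (by omega)
    have e₆ := veroDelta_mul_blockFactor n a b c (p + 1 + 1) q (r + 1) (by omega)
    have hblock (d : ℕ) (hd : d ≤ n) := blockFactor_ne_zero n d hd
    have hfactor := mul_ne_zero (mul_ne_zero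
      (mul_ne_zero (mul_ne_zero (hblock (p + 1 + 1) (by omega)) (hblock (q + 1) (by omega)))
        (hblock r (by omega)))
      (mul_ne_zero (mul_ne_zero (hblock (p + 1) (by omega)) (hblock q (by omega)))
        (hblock (r + 1 + 1) (by omega))))
      (mul_ne_zero (mul_ne_zero (hblock p (by omega)) (hblock (q + 1 + 1) (by omega)))
        (hblock (r + 1) (by omega)))
    refine mul_right_cancel₀ hfactor ?_
    have hleft := congrArg₂ (· * ·) (congrArg₂ (· * ·) e₁ e₂) e₃
    have hright := congrArg₂ (· * ·) (congrArg₂ (· * ·) e₄ e₅) e₆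
    linear_combination hleft - hright
end

section
/- Fix an integer $n \geq 2$. For $t \in \mathbb{R}$ and $1 \leq m \leq n$ let $u_m(t) \in \mathbb{R}^n$ be the vector whose $i$-th entry is $\binom{n-m}{i-1}\, t^{\,n-m-i+1}$ if $1 \leq i \leq n-m+1$ and $0$ otherwise. Let $a, b, c, d \in \mathbb{R}$ be pairwise distinct and let $1 \leq p \leq n-1$. Writing $\det[U_k(s), U_l(t), x]$ for the determinant of the $n \times n$ matrix with columns $u_1(s),\dots,u_k(s), u_1(t),\dots,u_l(t), x$, the four determinants $\det[U_p(a), U_{n-p-1}(c), u_1(b)]$, $\det[U_{p-1}(a), U_{n-p}(c), u_1(d)]$, $\det[U_p(a), U_{n-p-1}(c), u_1(d)]$, $\det[U_{p-1}(a), U_{n-p}(c), u_1(b)]$ are all nonzero, and $-\dfrac{\det[U_p(a), U_{n-p-1}(c), u_1(b)]\cdot\det[U_{p-1}(a), U_{n-p}(c), u_1(d)]}{\det[U_p(a), U_{n-p-1}(c), u_1(d)]\cdot\det[U_{p-1}(a), U_{n-p}(c), u_1(b)]} = -\dfrac{(b-a)(d-c)}{(b-c)(d-a)}$. -/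
/-- `veroDet2 n k s t x` is `det[U_k(s), U_{n-1-k}(t), x]`: the determinant of the
`n × n` matrix with columns `u_1(s),…,u_k(s), u_1(t),…,u_{n-1-k}(t), x`. -/
def veroDet2 (n : ℕ) (k : ℕ) (s t : ℝ) (x : Fin n → ℝ) : ℝ :=
  (Matrix.of fun i j : Fin n =>
    if (j : ℕ) < k then veroVec n s (j : ℕ) i
    else if (j : ℕ) < n - 1 then veroVec n t ((j : ℕ) - k) i
    else x i).det

open Polynomial in
/-- The polynomial in `t` whose value is the pairing of `v` with `veroVec (N + 1) t 0`. -/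
noncomputable def veroPairing (N : ℕ) (v : Fin (N + 1) → ℝ) : ℝ[X] :=
  ∑ i : Fin (N + 1), monomial (N - i) (v i * (N.choose i : ℝ))

theorem Nat.choose_mul_choose_sub_comm (N i m : ℕ) :
    N.choose i * (N - i).choose m = N.choose m * (N - m).choose i := by
  have h₁ := Nat.choose_mul (n := N) (Nat.le_add_right i m)
  have h₂ := Nat.choose_mul (n := N) (Nat.le_add_left m i)
  rw [Nat.add_sub_cancel_left] at h₁
  rw [Nat.add_sub_cancel] at h₂
  rw [← h₁, ← h₂, Nat.choose_symm_add]

theorem veroVec_succ_apply (N : ℕ) (t : ℝ) (m : ℕ) (i : Fin (N + 1)) :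
    veroVec (N + 1) t m i = ((N - m).choose i : ℝ) * t ^ (N - m - i) := by
  rw [veroVec, Nat.add_sub_cancel]
  split_ifs with h
  · rfl
  · simp [Nat.choose_eq_zero_of_lt (not_le.mp h)]

open Polynomial in
theorem eval_hasseDeriv_veroPairing (N : ℕ) (v : Fin (N + 1) → ℝ) (m : ℕ) (t : ℝ) :
    (hasseDeriv m (veroPairing N v)).eval t =
      (N.choose m : ℝ) * ∑ i, v i * veroVec (N + 1) t m i := by
  simp only [veroPairing, map_sum, hasseDeriv_monomial, eval_finsetSum, eval_monomial,
    Finset.mul_sum, veroVec_succ_apply]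
  refine Finset.sum_congr rfl fun i _ => ?_
  have h : (N.choose i : ℝ) * (N - i).choose m = N.choose m * (N - m).choose i := by
    exact_mod_cast Nat.choose_mul_choose_sub_comm N i m
  rw [Nat.sub_right_comm]
  linear_combination v i * t ^ (N - m - i) * h

open Polynomial in
theorem eval_veroPairing (N : ℕ) (v : Fin (N + 1) → ℝ) (t : ℝ) :
    (veroPairing N v).eval t = ∑ i, v i * veroVec (N + 1) t 0 i := by
  simpa using eval_hasseDeriv_veroPairing N v 0 t

open Polynomial in
theorem natDegree_veroPairing_le (N : ℕ) (v : Fin (N + 1) → ℝ) :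
    (veroPairing N v).natDegree ≤ N :=
  natDegree_sum_le_of_forall_le _ _ fun _ _ => (natDegree_monomial_le _).trans (Nat.sub_le _ _)

open Polynomial in
theorem eq_zero_of_veroPairing_eq_zero {N : ℕ} {v : Fin (N + 1) → ℝ}
    (h : veroPairing N v = 0) : v = 0 := by
  funext i
  have hc : (veroPairing N v).coeff (N - i) = v i * (N.choose i : ℝ) := by
    rw [veroPairing, finsetSum_coeff, Finset.sum_eq_single i]
    · simp
    · intro j _ hj
      rw [coeff_monomial, if_neg]
      have := Fin.val_ne_of_ne hj
      omega
    · simp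
  have hN : (N.choose i : ℝ) ≠ 0 := by
    exact_mod_cast (Nat.choose_pos (Nat.lt_succ_iff.mp i.isLt)).ne'
  rw [h, coeff_zero] at hc
  exact (mul_eq_zero.mp hc.symm).resolve_right hN

open Polynomial in
theorem X_sub_C_pow_dvd_veroPairing {N k : ℕ} {v : Fin (N + 1) → ℝ} {t : ℝ}
    (h : ∀ m < k, ∑ i, v i * veroVec (N + 1) t m i = 0) :
    (X - C t) ^ k ∣ veroPairing N v := by
  rw [X_sub_C_pow_dvd_iff, X_pow_dvd_iff]
  intro m hm
  rw [← taylor_apply, taylor_coeff, eval_hasseDeriv_veroPairing, h m hm, mul_zero]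

open Polynomial in
theorem exists_veroPairing_eq {N k : ℕ} (hk : k ≤ N) {v : Fin (N + 1) → ℝ} {s t : ℝ}
    (hst : s ≠ t) (hs : ∀ m < k, ∑ i, v i * veroVec (N + 1) s m i = 0)
    (ht : ∀ m < N - k, ∑ i, v i * veroVec (N + 1) t m i = 0) :
    ∃ r : ℝ, veroPairing N v = (X - C s) ^ k * (X - C t) ^ (N - k) * C r := by
  have hcop : IsCoprime ((X - C s) ^ k) ((X - C t) ^ (N - k)) :=
    (isCoprime_X_sub_C_of_isUnit_sub (sub_ne_zero.mpr hst).isUnit).pow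
  obtain ⟨g, hg⟩ :=
    hcop.mul_dvd (X_sub_C_pow_dvd_veroPairing hs) (X_sub_C_pow_dvd_veroPairing ht)
  have hmon : ((X - C s) ^ k * (X - C t) ^ (N - k)).Monic :=
    ((monic_X_sub_C s).pow k).mul ((monic_X_sub_C t).pow (N - k))
  have hdeg : ((X - C s) ^ k * (X - C t) ^ (N - k)).natDegree = N := by
    rw [((monic_X_sub_C s).pow k).natDegree_mul ((monic_X_sub_C t).pow (N - k))]
    simp [hk]
  refine ⟨g.coeff 0, ?_⟩
  rw [hg]
  congr 1
  by_cases hg0 : g = 0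
  · simp [hg0]
  refine eq_C_of_natDegree_eq_zero ?_
  have := natDegree_veroPairing_le N v
  rw [hg, hmon.natDegree_mul' hg0, hdeg] at this
  omega

/-- The matrix whose determinant is `veroDet2 (N + 1) k s t x`. -/
noncomputable def veroMatrix (N k : ℕ) (s t : ℝ) (x : Fin (N + 1) → ℝ) :
    Matrix (Fin (N + 1)) (Fin (N + 1)) ℝ :=
  Matrix.of fun i j =>
    if (j : ℕ) < k then veroVec (N + 1) s (j : ℕ) i
    else if (j : ℕ) < N then veroVec (N + 1) t ((j : ℕ) - k) i
    else x i

theorem veroDet2_succ (N k : ℕ) (s t : ℝ) (x : Fin (N + 1) → ℝ) :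
    veroDet2 (N + 1) k s t x = (veroMatrix N k s t x).det := rfl

theorem veroMatrix_apply_of_lt {N k m : ℕ} (hk : k ≤ N) (hm : m < k) (s t : ℝ)
    (x : Fin (N + 1) → ℝ) (i : Fin (N + 1)) :
    veroMatrix N k s t x i ⟨m, by omega⟩ = veroVec (N + 1) s m i := by
  simp [veroMatrix, hm]

theorem veroMatrix_apply_add {N k m : ℕ} (hm : m < N - k) (s t : ℝ)
    (x : Fin (N + 1) → ℝ) (i : Fin (N + 1)) :
    veroMatrix N k s t x i ⟨k + m, by omega⟩ = veroVec (N + 1) t m i := by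
  have : k + m < N := by omega
  simp [veroMatrix, this]

theorem veroMatrix_apply_last {N k : ℕ} (hk : k ≤ N) (s t : ℝ) (x : Fin (N + 1) → ℝ)
    (i : Fin (N + 1)) : veroMatrix N k s t x i (Fin.last N) = x i := by
  simp [veroMatrix, hk]

theorem veroDet2_ne_zero {N k : ℕ} (hk : k ≤ N) {s t b : ℝ} (hst : s ≠ t) (hbs : b ≠ s)
    (hbt : b ≠ t) : veroDet2 (N + 1) k s t (veroVec (N + 1) b 0) ≠ 0 := by
  rw [veroDet2_succ]
  intro h
  obtain ⟨v, hv0, hv⟩ := Matrix.exists_vecMul_eq_zero_iff.mpr h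
  have hcol (j) : ∑ i, v i * veroMatrix N k s t (veroVec (N + 1) b 0) i j = 0 := congrFun hv j
  obtain ⟨r, hr⟩ := exists_veroPairing_eq (v := v) hk hst
    (fun m hm => by simpa only [veroMatrix_apply_of_lt hk hm] using hcol ⟨m, by omega⟩)
    (fun m hm => by simpa only [veroMatrix_apply_add hm] using hcol ⟨k + m, by omega⟩)
  have hb : (veroPairing N v).eval b = 0 := by
    rw [eval_veroPairing]
    simpa only [veroMatrix_apply_last hk] using hcol (Fin.last N)
  have hr0 : r = 0 := by
    simpa [hr, sub_ne_zero.mpr hbs, sub_ne_zero.mpr hbt] using hb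
  exact hv0 (eq_zero_of_veroPairing_eq_zero (by simp [hr, hr0]))

theorem exists_veroDet2_eq_sum {N k : ℕ} (hk : k ≤ N) (s t : ℝ) :
    ∃ v : Fin (N + 1) → ℝ, ∀ x, veroDet2 (N + 1) k s t x = ∑ i, v i * x i := by
  let L := (LinearMap.proj (Fin.last N)).comp (veroMatrix N k s t 0).cramer
  refine ⟨fun i => L (fun j => if i = j then 1 else 0), fun x => ?_⟩
  have hx : veroDet2 (N + 1) k s t x = L x := by
    rw [veroDet2_succ, LinearMap.comp_apply, LinearMap.proj_apply, Matrix.cramer_apply]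
    congr 1
    ext i j
    by_cases hj : j = Fin.last N
    · subst hj
      simp [veroMatrix_apply_last hk]
    · have : (j : ℕ) < N := Fin.val_lt_last hj
      simp [Matrix.updateCol_ne hj, veroMatrix, this]
  rw [hx, LinearMap.pi_apply_eq_sum_univ L x]
  simp [mul_comm]

/-- As a function of `b`, the determinant vanishes to order `k` at `s` and `N - k` at `t`. -/
theorem exists_veroDet2_eq {N k : ℕ} (hk : k ≤ N) {s t : ℝ} (hst : s ≠ t) :
    ∃ r : ℝ, ∀ b, veroDet2 (N + 1) k s t (veroVec (N + 1) b 0) =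
      (b - s) ^ k * (b - t) ^ (N - k) * r := by
  obtain ⟨v, hv⟩ := exists_veroDet2_eq_sum hk s t
  obtain ⟨r, hr⟩ := exists_veroPairing_eq (v := v) hk hst
    (fun m hm => by
      rw [← hv, veroDet2_succ]
      refine Matrix.det_zero_of_column_eq (i := ⟨m, by omega⟩) (j := Fin.last N) ?_ fun i => ?_
      · exact Fin.ne_of_val_ne (by simp only [Fin.val_last]; omega)
      · rw [veroMatrix_apply_of_lt hk hm, veroMatrix_apply_last hk])
    (fun m hm => by
      rw [← hv, veroDet2_succ]
      refine Matrix.det_zero_of_column_eq (i := ⟨k + m, by omega⟩) (j := Fin.last N) ?_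
        fun i => ?_
      · exact Fin.ne_of_val_ne (by simp only [Fin.val_last]; omega)
      · rw [veroMatrix_apply_add hm, veroMatrix_apply_last hk])
  refine ⟨r, fun b => ?_⟩
  rw [hv, ← eval_veroPairing, hr]
  simp

/-- **Proposition 5.5.** For pairwise distinct `a, b, c, d ∈ ℝ` and `1 ≤ p ≤ n-1`,
the four determinants occurring in the `p`-th double ratio of the Veronese flags
`ν(a), ν(c), ν(b), ν(d)` are nonzero, and the double ratio equals
`-((b-a)(d-c))/((b-c)(d-a))`, i.e. `-z⁻¹` for the cross ratio `z = z(c,d,a,b)`. -/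
theorem veronese_double_ratio (n : ℕ) (hn : 2 ≤ n) (a b c d : ℝ)
    (hab : a ≠ b) (hac : a ≠ c) (had : a ≠ d) (hbc : b ≠ c) (hbd : b ≠ d) (hcd : c ≠ d)
    (p : ℕ) (hp1 : 1 ≤ p) (hp2 : p ≤ n - 1) :
    (veroDet2 n p a c (veroVec n b 0) ≠ 0 ∧
     veroDet2 n (p - 1) a c (veroVec n d 0) ≠ 0 ∧
     veroDet2 n p a c (veroVec n d 0) ≠ 0 ∧
     veroDet2 n (p - 1) a c (veroVec n b 0) ≠ 0) ∧
    -((veroDet2 n p a c (veroVec n b 0) * veroDet2 n (p - 1) a c (veroVec n d 0)) /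
        (veroDet2 n p a c (veroVec n d 0) * veroDet2 n (p - 1) a c (veroVec n b 0))) =
      -(((b - a) * (d - c)) / ((b - c) * (d - a))) := by
  obtain ⟨N, rfl⟩ : ∃ N, n = N + 1 := ⟨n - 1, by omega⟩
  obtain ⟨q, rfl⟩ : ∃ q, p = q + 1 := ⟨p - 1, by omega⟩
  rw [Nat.add_sub_cancel] at hp2 ⊢
  have hq : q ≤ N := by omega
  have h₁ := veroDet2_ne_zero hp2 hac hab.symm hbc
  have h₂ := veroDet2_ne_zero hq hac had.symm hcd.symm
  have h₃ := veroDet2_ne_zero hp2 hac had.symm hcd.symm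
  have h₄ := veroDet2_ne_zero hq hac hab.symm hbc
  refine ⟨⟨h₁, h₂, h₃, h₄⟩, ?_⟩
  have hbc' := sub_ne_zero.mpr hbc
  have hda := sub_ne_zero.mpr had.symm
  rw [neg_inj, div_eq_div_iff (mul_ne_zero h₃ h₄) (mul_ne_zero hbc' hda)]
  obtain ⟨r, hr⟩ := exists_veroDet2_eq hp2 hac
  obtain ⟨r', hr'⟩ := exists_veroDet2_eq hq hac
  have hN : N - q = N - (q + 1) + 1 := by omega
  simp only [hr, hr', hN, pow_succ]
  ring
end

section
/- Let $n \geq 3$ and let $u, v, w : \{1,\dots,n\} \to \mathbb{R}^n$ be families of vectors such that $\Delta_{u,v,w}(d_1,d_2,d_3) \neq 0$ for all nonnegative integers $d_1, d_2, d_3$ with $d_1+d_2+d_3 = n$. Then for all integers $p, q, r \geq 1$ with $p+q+r = n$, the triple ratios satisfy $T_{pqr}(u,v,w) = T_{qrp}(v,w,u)$ and $T_{pqr}(u,v,w) = T_{qpr}(v,u,w)^{-1}$. -/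
/-- `tripleDelta n u v w d₁ d₂ d₃` is the determinant `Δ_{u,v,w}(d₁,d₂,d₃)` of the
`n × n` matrix whose columns are `u_1,…,u_{d₁}, v_1,…,v_{d₂}, w_1,…,w_{d₃}` in this
order (meaningful when `d₁ + d₂ + d₃ = n`). -/
def tripleDelta (n : ℕ) (u v w : Fin n → Fin n → ℝ) (d₁ d₂ d₃ : ℕ) : ℝ :=
  (Matrix.of fun i j : Fin n =>
    if (j : ℕ) < d₁ then u j i
    else if (j : ℕ) < d₁ + d₂ then
      v ⟨(j : ℕ) - d₁, Nat.lt_of_le_of_lt (Nat.sub_le _ _) j.isLt⟩ i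
    else
      w ⟨(j : ℕ) - d₁ - d₂,
        Nat.lt_of_le_of_lt (le_trans (Nat.sub_le _ _) (Nat.sub_le _ _)) j.isLt⟩ i).det

/-- The `(p,q,r)`-th triple ratio `T_{pqr}(u,v,w)` of three flags given by bases
`u`, `v`, `w`. -/
noncomputable def tripleRatio (n : ℕ) (u v w : Fin n → Fin n → ℝ) (p q r : ℕ) : ℝ :=
  (tripleDelta n u v w (p + 1) q (r - 1) * tripleDelta n u v w p (q - 1) (r + 1) *
      tripleDelta n u v w (p - 1) (q + 1) r) /
    (tripleDelta n u v w (p - 1) q (r + 1) * tripleDelta n u v w p (q + 1) (r - 1) *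
      tripleDelta n u v w (p + 1) (q - 1) r)

theorem finRotate_pow_apply (m a : ℕ) (j : Fin (m + 1)) :
    (((finRotate (m + 1) ^ a) j : Fin (m + 1)) : ℕ) = (j + a) % (m + 1) := by
  induction a with
  | zero => simp [Nat.mod_eq_of_lt j.isLt]
  | succ a ih =>
    rw [pow_succ', Equiv.Perm.mul_apply, finRotate_apply, Fin.val_add, ih]
    simp [← add_assoc]

/-- Cyclically shifting the first `m` columns of a matrix by `a` positions multiplies its
determinant by `(-1) ^ ((m - 1) * a)`. -/
theorem det_rotate_prefix {n : ℕ} (m a : ℕ) (hm : 0 < m) (hmn : m ≤ n)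
    (M N : Matrix (Fin n) (Fin n) ℝ)
    (hlow : ∀ i j : Fin n, (j : ℕ) < m →
      N i j = M i ⟨(j + a) % m, (Nat.mod_lt _ hm).trans_le hmn⟩)
    (hhigh : ∀ i j : Fin n, m ≤ (j : ℕ) → N i j = M i j) :
    N.det = (-1) ^ ((m - 1) * a) * M.det := by
  obtain ⟨c, rfl⟩ := Nat.exists_eq_add_of_le hmn
  obtain ⟨m, rfl⟩ := Nat.exists_eq_add_one_of_ne_zero hm.ne'
  let σ : Equiv.Perm (Fin (m + 1 + c)) :=
    finSumFinEquiv.permCongr (Equiv.sumCongr (finRotate (m + 1) ^ a) (1 : Equiv.Perm (Fin c)))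
  have hσ : Equiv.Perm.sign σ = (-1) ^ (m * a) := by
    simp only [σ, Equiv.Perm.sign_permCongr]
    rw [← Equiv.Perm.sumCongr, Equiv.Perm.sign_sumCongr]
    simp [sign_finRotate, pow_mul]
  have hN : N = M.submatrix id σ := by
    ext i j
    obtain ⟨x, rfl⟩ := finSumFinEquiv.surjective j
    rcases x with x | x
    · rw [hlow _ _ (by simpa using x.isLt)]
      simp only [Matrix.submatrix_apply, id]
      congr 1
      ext
      simp [σ, Equiv.permCongr_apply, finRotate_pow_apply]
    · rw [hhigh _ _ (by simp)]
      simp [σ, Equiv.permCongr_apply]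
  rw [hN, Matrix.det_permute', hσ]
  simp

theorem tripleDelta_rotate {n a b c : ℕ} (u v w : Fin n → Fin n → ℝ) (h : a + b + c = n) :
    tripleDelta n v w u b c a = (-1) ^ ((n - 1) * a) * tripleDelta n u v w a b c := by
  rcases Nat.eq_zero_or_pos n with rfl | hn
  · simp [tripleDelta]
  refine det_rotate_prefix n a hn le_rfl _ _ (fun i j hj => ?_) (fun i j hj => by omega)
  simp only [Matrix.of_apply]
  by_cases hja : (j : ℕ) < b + c
  · have hmod : ((j : ℕ) + a) % n = j + a := Nat.mod_eq_of_lt (by omega)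
    simp only [hmod]
    split_ifs <;> first | omega | (congr 2; grind)
  · have hmod : ((j : ℕ) + a) % n = j - b - c := by
      rw [show (j : ℕ) + a = j - b - c + n by omega, Nat.add_mod_right]
      exact Nat.mod_eq_of_lt (by omega)
    simp only [hmod]
    split_ifs <;> first | omega | rfl

theorem tripleDelta_swap {n a b c : ℕ} (u v w : Fin n → Fin n → ℝ) (h : a + b + c = n) :
    tripleDelta n v u w b a c = (-1) ^ (a * b) * tripleDelta n u v w a b c := by
  rcases Nat.eq_zero_or_pos (a + b) with hab | hab
  · obtain ⟨rfl, rfl⟩ : a = 0 ∧ b = 0 := by omega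
    simp [tripleDelta]
  have hsign : (-1 : ℝ) ^ (a * b) = (-1) ^ ((a + b - 1) * a) := by
    rcases a with _ | a
    · simp
    · rw [show (a + 1 + b - 1) * (a + 1) = a * (a + 1) + (a + 1) * b by
        rw [show a + 1 + b - 1 = a + b by omega]; ring, pow_add,
        (Nat.even_mul_succ_self a).neg_one_pow, one_mul]
  rw [hsign]
  refine det_rotate_prefix (a + b) a hab (by omega) _ _ (fun i j hj => ?_) (fun i j hj => ?_)
  · simp only [Matrix.of_apply]
    by_cases hja : (j : ℕ) < b
    · have hmod : ((j : ℕ) + a) % (a + b) = j + a := Nat.mod_eq_of_lt (by omega)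
      simp only [hmod]
      split_ifs <;> first | omega | (congr 2; grind)
    · have hmod : ((j : ℕ) + a) % (a + b) = j - b := by
        rw [show (j : ℕ) + a = j - b + (a + b) by omega, Nat.add_mod_right]
        exact Nat.mod_eq_of_lt (by omega)
      simp only [hmod]
      split_ifs <;> first | omega | rfl
  · simp only [Matrix.of_apply]
    split_ifs <;> first | omega | (congr 2; grind)

/-- **Proposition 4.2.** Behaviour of the triple ratio under permutation of a
generic flag triple: `T_{pqr}(u,v,w) = T_{qrp}(v,w,u) = T_{qpr}(v,u,w)⁻¹`. -/
theorem tripleRatio_perm (n : ℕ) (hn : 3 ≤ n) (u v w : Fin n → Fin n → ℝ)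
    (hgen : ∀ d₁ d₂ d₃ : ℕ, d₁ + d₂ + d₃ = n → tripleDelta n u v w d₁ d₂ d₃ ≠ 0) :
    ∀ p q r : ℕ, 1 ≤ p → 1 ≤ q → 1 ≤ r → p + q + r = n →
      tripleRatio n u v w p q r = tripleRatio n v w u q r p ∧
      tripleRatio n u v w p q r = (tripleRatio n v u w q p r)⁻¹ := by
  intro p q r hp hq hr hpqr
  obtain ⟨p, rfl⟩ := Nat.exists_eq_add_of_le' hp
  obtain ⟨q, rfl⟩ := Nat.exists_eq_add_of_le' hq
  obtain ⟨r, rfl⟩ := Nat.exists_eq_add_of_le' hr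
  have hneg (k : ℕ) : (-1 : ℝ) ^ k ≠ 0 := pow_ne_zero _ (by norm_num)
  simp only [tripleRatio, Nat.add_sub_cancel]
  constructor
  · rw [tripleDelta_rotate u v w (by omega), tripleDelta_rotate u v w (by omega),
      tripleDelta_rotate u v w (by omega), tripleDelta_rotate u v w (by omega),
      tripleDelta_rotate u v w (by omega), tripleDelta_rotate u v w (by omega)]
    rw [← mul_div_mul_left _ _ (mul_ne_zero (mul_ne_zero (hneg ((n - 1) * p))
      (hneg ((n - 1) * (p + 1)))) (hneg ((n - 1) * (p + 1 + 1))))]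
    congr 1 <;> ring
  · rw [tripleDelta_swap u v w (by omega), tripleDelta_swap u v w (by omega),
      tripleDelta_swap u v w (by omega), tripleDelta_swap u v w (by omega),
      tripleDelta_swap u v w (by omega), tripleDelta_swap u v w (by omega), inv_div]
    rw [← mul_div_mul_left _ _ (hneg ((p + 1) * q + (p + 1 + 1) * (q + 1) + p * (q + 1 + 1)))]
    congr 1 <;> ring
end

section
/- Let $n \geq 3$ and let $u, v, w : \{1,\dots,n\} \to \mathbb{R}^n$ be families of vectors such that $\Delta_{u,v,w}(d_1,d_2,d_3) \neq 0$ for all nonnegative integers $d_1, d_2, d_3$ with $d_1+d_2+d_3 = n$. Suppose $u', v', w' : \{1,\dots,n\} \to \mathbb{R}^n$ are families with $u'_m = \sum_{j=1}^{m} \alpha_{mj} u_j$, $v'_m = \sum_{j=1}^{m} \beta_{mj} v_j$, $w'_m = \sum_{j=1}^{m} \gamma_{mj} w_j$ for real coefficients with $\alpha_{mm} \neq 0$, $\beta_{mm} \neq 0$, $\gamma_{mm} \neq 0$ for all $m$. Then for all integers $p, q, r \geq 1$ with $p+q+r = n$, $T_{pqr}(u',v',w') = T_{pqr}(u,v,w)$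 (and the nonvanishing hypothesis holds for $(u',v',w')$ as well). -/
/-- A sum over an initial segment, reindexed by a shift by `s`. -/
theorem sum_Iic_eq_sum_shift {n : ℕ} (f : Fin n → ℝ) (s : ℕ) (j m : Fin n)
    (h : (m : ℕ) + s = j) :
    ∑ x ∈ Finset.Iic m, f x =
      ∑ k : Fin n, if s ≤ (k : ℕ) ∧ k ≤ j then
        f ⟨(k : ℕ) - s, Nat.lt_of_le_of_lt (Nat.sub_le _ _) k.isLt⟩ else 0 := by
  rw [← Finset.sum_filter]
  have hj := j.isLt
  refine Finset.sum_bij'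
    (fun x hx => ⟨(x : ℕ) + s, by
      have := Fin.le_def.1 (Finset.mem_Iic.1 hx)
      omega⟩)
    (fun k _ => ⟨(k : ℕ) - s, Nat.lt_of_le_of_lt (Nat.sub_le _ _) k.isLt⟩) ?_ ?_ ?_ ?_ ?_
  · intro x hx
    have := Fin.le_def.1 (Finset.mem_Iic.1 hx)
    simp only [Finset.mem_filter, Finset.mem_univ, true_and, Fin.le_def]
    omega
  · intro k hk
    simp only [Finset.mem_filter, Finset.mem_univ, true_and, Fin.le_def] at hk
    simp only [Finset.mem_Iic, Fin.le_def]
    omega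
  · intro x hx
    simp
  · intro k hk
    simp only [Finset.mem_filter, Finset.mem_univ, true_and, Fin.le_def] at hk
    ext
    simp only
    omega
  · intro x hx
    simp

/-- The diagonal entries of a square array, extended by `1` beyond its size. -/
noncomputable def extendedDiag {n : ℕ} (α : Fin n → Fin n → ℝ) (k : ℕ) : ℝ :=
  if h : k < n then α ⟨k, h⟩ ⟨k, h⟩ else 1

theorem extendedDiag_of_lt {n : ℕ} (α : Fin n → Fin n → ℝ) {k : ℕ} (h : k < n) :
    extendedDiag α k = α ⟨k, h⟩ ⟨k, h⟩ :=
  dif_pos h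

theorem prod_extendedDiag_ne_zero {n : ℕ} {α : Fin n → Fin n → ℝ} (hα : ∀ m, α m m ≠ 0)
    (d : ℕ) : ∏ k ∈ Finset.range d, extendedDiag α k ≠ 0 := by
  refine Finset.prod_ne_zero_iff.2 fun k _ => ?_
  unfold extendedDiag
  split_ifs
  · exact hα _
  · exact one_ne_zero

/-- The block-diagonal upper triangular matrix relating the columns of two triples of bases. -/
def blockChange (n : ℕ) (α β γ : Fin n → Fin n → ℝ) (d₁ d₂ : ℕ) : Matrix (Fin n) (Fin n) ℝ :=
  Matrix.of fun k j =>
    if (j : ℕ) < d₁ then if 0 ≤ (k : ℕ) ∧ k ≤ j then α j k else 0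
    else if (j : ℕ) < d₁ + d₂ then
      if d₁ ≤ (k : ℕ) ∧ k ≤ j then
        β ⟨(j : ℕ) - d₁, Nat.lt_of_le_of_lt (Nat.sub_le _ _) j.isLt⟩
          ⟨(k : ℕ) - d₁, Nat.lt_of_le_of_lt (Nat.sub_le _ _) k.isLt⟩ else 0
    else
      if d₁ + d₂ ≤ (k : ℕ) ∧ k ≤ j then
        γ ⟨(j : ℕ) - (d₁ + d₂), Nat.lt_of_le_of_lt (Nat.sub_le _ _) j.isLt⟩
          ⟨(k : ℕ) - (d₁ + d₂), Nat.lt_of_le_of_lt (Nat.sub_le _ _) k.isLt⟩ else 0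

theorem det_blockChange {n : ℕ} (α β γ : Fin n → Fin n → ℝ) {d₁ d₂ d₃ : ℕ}
    (h : d₁ + d₂ + d₃ = n) :
    (blockChange n α β γ d₁ d₂).det =
      (∏ k ∈ Finset.range d₁, extendedDiag α k) * (∏ k ∈ Finset.range d₂, extendedDiag β k) *
        ∏ k ∈ Finset.range d₃, extendedDiag γ k := by
  have htri : (blockChange n α β γ d₁ d₂).BlockTriangular id := by
    intro k j hjk
    have hkj : ¬ k ≤ j := not_le.2 hjk
    simp [blockChange, hkj]
  rw [Matrix.det_of_isUpperTriangular htri]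
  let diag : ℕ → ℝ := fun k => if k < d₁ then extendedDiag α k
    else if k < d₁ + d₂ then extendedDiag β (k - d₁)
    else extendedDiag γ (k - (d₁ + d₂))
  have hdiag : ∀ j : Fin n, blockChange n α β γ d₁ d₂ j j = diag j := by
    intro j
    have hj := j.isLt
    simp only [diag, blockChange, Matrix.of_apply]
    split_ifs <;> first
      | omega
      | rw [extendedDiag_of_lt _ (by omega)]
  rw [Finset.prod_congr rfl fun j _ => hdiag j, Fin.prod_univ_eq_prod_range diag,
    congrArg Finset.range h.symm, Finset.prod_range_add, Finset.prod_range_add]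
  simp only [diag]
  congr 1
  · congr 1
    · refine Finset.prod_congr rfl fun k hk => ?_
      rw [if_pos (Finset.mem_range.1 hk)]
    · refine Finset.prod_congr rfl fun k hk => ?_
      have := Finset.mem_range.1 hk
      rw [if_neg (by omega), if_pos (by omega), Nat.add_sub_cancel_left]
  · refine Finset.prod_congr rfl fun k _ => ?_
    rw [if_neg (by omega), if_neg (by omega), Nat.add_sub_cancel_left]

/-- Triangular changes of bases multiply `tripleDelta` by a product of diagonal coefficients. -/
theorem tripleDelta_triangular_change {n : ℕ} {u v w u' v' w' α β γ : Fin n → Fin n → ℝ}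
    (hu' : ∀ m, u' m = ∑ j ∈ Finset.Iic m, α m j • u j)
    (hv' : ∀ m, v' m = ∑ j ∈ Finset.Iic m, β m j • v j)
    (hw' : ∀ m, w' m = ∑ j ∈ Finset.Iic m, γ m j • w j)
    {d₁ d₂ d₃ : ℕ} (h : d₁ + d₂ + d₃ = n) :
    tripleDelta n u' v' w' d₁ d₂ d₃ = tripleDelta n u v w d₁ d₂ d₃ *
      ((∏ k ∈ Finset.range d₁, extendedDiag α k) * (∏ k ∈ Finset.range d₂, extendedDiag β k) *
        ∏ k ∈ Finset.range d₃, extendedDiag γ k) := by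
  rw [← det_blockChange α β γ h, tripleDelta, tripleDelta, ← Matrix.det_mul]
  congr 1
  ext i j
  rw [Matrix.mul_apply]
  simp only [blockChange, Matrix.of_apply, Nat.sub_sub]
  by_cases h₁ : (j : ℕ) < d₁
  · simp only [if_pos h₁]
    rw [hu', Finset.sum_apply, sum_Iic_eq_sum_shift _ 0 j j rfl]
    refine Finset.sum_congr rfl fun k _ => ?_
    by_cases hk : 0 ≤ (k : ℕ) ∧ k ≤ j
    · have : (k : ℕ) < d₁ := lt_of_le_of_lt (Fin.le_def.1 hk.2) h₁
      rw [if_pos hk, if_pos hk, if_pos this]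
      exact mul_comm _ _
    · rw [if_neg hk, if_neg hk, mul_zero]
  · by_cases h₂ : (j : ℕ) < d₁ + d₂
    · simp only [if_neg h₁, if_pos h₂]
      rw [hv', Finset.sum_apply, sum_Iic_eq_sum_shift _ d₁ j _ (Nat.sub_add_cancel (not_lt.1 h₁))]
      refine Finset.sum_congr rfl fun k _ => ?_
      by_cases hk : d₁ ≤ (k : ℕ) ∧ k ≤ j
      · have : (k : ℕ) < d₁ + d₂ := lt_of_le_of_lt (Fin.le_def.1 hk.2) h₂
        rw [if_pos hk, if_pos hk, if_neg (not_lt.2 hk.1), if_pos this]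
        exact mul_comm _ _
      · rw [if_neg hk, if_neg hk, mul_zero]
    · simp only [if_neg h₁, if_neg h₂]
      rw [hw', Finset.sum_apply,
        sum_Iic_eq_sum_shift _ (d₁ + d₂) j _ (Nat.sub_add_cancel (not_lt.1 h₂))]
      refine Finset.sum_congr rfl fun k _ => ?_
      by_cases hk : d₁ + d₂ ≤ (k : ℕ) ∧ k ≤ j
      · rw [if_pos hk, if_pos hk, if_neg (by omega), if_neg (not_lt.2 hk.1)]
        exact mul_comm _ _
      · rw [if_neg hk, if_neg hk, mul_zero]

/-- The triple ratio is independent of the choice of bases adapted to the flags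
(Section 4.1): triangular changes of basis with nonzero diagonal coefficients
leave all triple ratios unchanged, and preserve genericity. -/
theorem tripleRatio_basis_independent (n : ℕ) (hn : 3 ≤ n)
    (u v w u' v' w' : Fin n → Fin n → ℝ)
    (hgen : ∀ d₁ d₂ d₃ : ℕ, d₁ + d₂ + d₃ = n → tripleDelta n u v w d₁ d₂ d₃ ≠ 0)
    (α β γ : Fin n → Fin n → ℝ)
    (hα : ∀ m, α m m ≠ 0) (hβ : ∀ m, β m m ≠ 0) (hγ : ∀ m, γ m m ≠ 0)
    (hu' : ∀ m, u' m = ∑ j ∈ Finset.Iic m, α m j • u j)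
    (hv' : ∀ m, v' m = ∑ j ∈ Finset.Iic m, β m j • v j)
    (hw' : ∀ m, w' m = ∑ j ∈ Finset.Iic m, γ m j • w j) :
    (∀ d₁ d₂ d₃ : ℕ, d₁ + d₂ + d₃ = n → tripleDelta n u' v' w' d₁ d₂ d₃ ≠ 0) ∧
    ∀ p q r : ℕ, 1 ≤ p → 1 ≤ q → 1 ≤ r → p + q + r = n →
      tripleRatio n u' v' w' p q r = tripleRatio n u v w p q r := by
  have hA := prod_extendedDiag_ne_zero hα
  have hB := prod_extendedDiag_ne_zero hβ
  have hC := prod_extendedDiag_ne_zero hγ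
  refine ⟨fun d₁ d₂ d₃ h => ?_, fun p q r hp hq hr h => ?_⟩
  · rw [tripleDelta_triangular_change hu' hv' hw' h]
    exact mul_ne_zero (hgen _ _ _ h) (mul_ne_zero (mul_ne_zero (hA _) (hB _)) (hC _))
  · have key := fun d₁ d₂ d₃ (h : d₁ + d₂ + d₃ = n) =>
      tripleDelta_triangular_change hu' hv' hw' h
    unfold tripleRatio
    rw [key (p + 1) q (r - 1) (by omega), key p (q - 1) (r + 1) (by omega),
      key (p - 1) (q + 1) r (by omega), key (p - 1) q (r + 1) (by omega),
      key p (q + 1) (r - 1) (by omega), key (p + 1) (q - 1) r (by omega)]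
    have hscale := mul_ne_zero
      (mul_ne_zero (mul_ne_zero (mul_ne_zero (hA (p - 1)) (hA p)) (hA (p + 1)))
        (mul_ne_zero (mul_ne_zero (hB (q - 1)) (hB q)) (hB (q + 1))))
      (mul_ne_zero (mul_ne_zero (hC (r - 1)) (hC r)) (hC (r + 1)))
    rw [← mul_div_mul_right _ (tripleDelta n u v w (p - 1) q (r + 1) *
      tripleDelta n u v w p (q + 1) (r - 1) * tripleDelta n u v w (p + 1) (q - 1) r) hscale]
    congr 1 <;> ring
end

section
/- Let $n \geq 2$ and $1 \leq p \leq n-1$. Let $u, v : \{1,\dots,n\} \to \mathbb{R}^n$ be families of vectors and $g, g' \in \mathbb{R}^n$ be vectors such that the four determinants occurring in $D_p(u,v,g,g')$ are nonzero. Suppose $u'_m = \sum_{j=1}^{m} \alpha_{mj} u_j$ and $v'_m = \sum_{j=1}^{m} \beta_{mj} v_j$ with $\alpha_{mm} \neq 0$ and $\beta_{mm} \neq 0$ for all $m$, and let $\lambda, \mu \in \mathbb{R}$ be nonzero. Then $D_p(u', v', \lambda g, \mu g') = D_p(u,v,g,g')$. -/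
/-- `doubleDet n u v a x` is the determinant of the `n × n` matrix with columns
`u_1,…,u_a, v_1,…,v_{n-1-a}, x` in this order. -/
def doubleDet (n : ℕ) (u v : Fin n → Fin n → ℝ) (a : ℕ) (x : Fin n → ℝ) : ℝ :=
  (Matrix.of fun i j : Fin n =>
    if (j : ℕ) < a then u j i
    else if (j : ℕ) < n - 1 then
      v ⟨(j : ℕ) - a, Nat.lt_of_le_of_lt (Nat.sub_le _ _) j.isLt⟩ i
    else x i).det

/-- The `p`-th double ratio
`D_p(u,v,g,g') = -(det[u₁,…,u_p,v₁,…,v_{n-p-1},g]·det[u₁,…,u_{p-1},v₁,…,v_{n-p},g']) /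
(det[u₁,…,u_p,v₁,…,v_{n-p-1},g']·det[u₁,…,u_{p-1},v₁,…,v_{n-p},g])`. -/
noncomputable def doubleRatio (n : ℕ) (u v : Fin n → Fin n → ℝ) (g g' : Fin n → ℝ)
    (p : ℕ) : ℝ :=
  -((doubleDet n u v p g * doubleDet n u v (p - 1) g') /
    (doubleDet n u v p g' * doubleDet n u v (p - 1) g))

/-- The matrix of a triangular change of basis from the columns
`u_1,…,u_a, v_1,…,v_{n-1-a}, x` to the columns `u'_1,…,u'_a, v'_1,…,v'_{n-1-a}, t • x`, where `u'`
and `v'` are obtained from `u` and `v` by the lower triangular coefficients `α` and `β`. -/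
def doubleTransition (n : ℕ) (α β : Fin n → Fin n → ℝ) (a : ℕ) (t : ℝ) :
    Matrix (Fin n) (Fin n) ℝ :=
  Matrix.of fun k j : Fin n =>
    if k ≤ j then
      if (j : ℕ) < a then α j k
      else if (j : ℕ) < n - 1 then
        if a ≤ (k : ℕ) then
          β ⟨(j : ℕ) - a, Nat.lt_of_le_of_lt (Nat.sub_le _ _) j.isLt⟩
            ⟨(k : ℕ) - a, Nat.lt_of_le_of_lt (Nat.sub_le _ _) k.isLt⟩
        else 0
      else if k = j then t else 0
    else 0

theorem det_doubleTransition (n : ℕ) (α β : Fin n → Fin n → ℝ) (a : ℕ) (t : ℝ) :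
    (doubleTransition n α β a t).det = ∏ j, doubleTransition n α β a t j j := by
  apply Matrix.det_of_isUpperTriangular
  intro k j hjk
  simp only [id] at hjk
  simp [doubleTransition, not_le.mpr hjk]

/-- The determinant of the transition matrix is linear in the scaling factor of the last column. -/
theorem det_doubleTransition_eq_mul (n : ℕ) (hn : 0 < n) (α β : Fin n → Fin n → ℝ) (a : ℕ)
    (ha : a ≤ n - 1) (t : ℝ) :
    (doubleTransition n α β a t).det = (doubleTransition n α β a 1).det * t := by
  have ht : t = ∏ j : Fin n, if j = ⟨n - 1, by omega⟩ then t else 1 := by simp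
  rw [det_doubleTransition, det_doubleTransition]
  conv_rhs => rw [ht]
  rw [← Finset.prod_mul_distrib]
  refine Finset.prod_congr rfl fun j _ => ?_
  have hj := j.isLt
  simp only [doubleTransition, Matrix.of_apply, Fin.ext_iff]
  split_ifs <;> first | omega | simp_all

theorem det_doubleTransition_one_ne_zero (n : ℕ) (α β : Fin n → Fin n → ℝ) (a : ℕ)
    (hα : ∀ m, α m m ≠ 0) (hβ : ∀ m, β m m ≠ 0) : (doubleTransition n α β a 1).det ≠ 0 := by
  rw [det_doubleTransition, Finset.prod_ne_zero_iff]
  intro j _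
  simp only [doubleTransition, Matrix.of_apply, le_refl, if_true]
  split_ifs
  · exact hα j
  · exact hβ _
  · omega
  · exact one_ne_zero

/-- Triangular changes of `u` and `v` multiply `doubleDet` by the determinant of the transition
matrix. -/
theorem doubleDet_eq_mul_det_doubleTransition (n : ℕ) (a : ℕ)
    (u v u' v' : Fin n → Fin n → ℝ) (α β : Fin n → Fin n → ℝ)
    (hu' : ∀ m, u' m = ∑ j ∈ Finset.Iic m, α m j • u j)
    (hv' : ∀ m, v' m = ∑ j ∈ Finset.Iic m, β m j • v j) (t : ℝ) (x : Fin n → ℝ) :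
    doubleDet n u' v' a (t • x) = doubleDet n u v a x * (doubleTransition n α β a t).det := by
  rw [doubleDet, doubleDet, ← Matrix.det_mul]
  congr 1
  ext i j
  have hj := j.isLt
  simp only [Matrix.mul_apply, Matrix.of_apply, doubleTransition]
  by_cases hja : (j : ℕ) < a
  · simp only [hja, if_true, hu', Finset.sum_apply, Pi.smul_apply, smul_eq_mul, mul_ite, mul_zero,
      ← Finset.sum_filter]
    refine Finset.sum_congr (by ext; simp) fun k hk => ?_
    have hkj : (k : ℕ) ≤ j := by simpa using hk
    rw [if_pos (by omega), mul_comm]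
  by_cases hjn : (j : ℕ) < n - 1
  · simp only [hja, hjn, if_true, if_false, hv', Finset.sum_apply, Pi.smul_apply, smul_eq_mul,
      mul_ite, mul_zero, ← ite_and, ← Finset.sum_filter]
    symm
    refine Finset.sum_bij_ne_zero
      (fun k _ _ => ⟨(k : ℕ) - a, Nat.lt_of_le_of_lt (Nat.sub_le _ _) k.isLt⟩) ?_ ?_ ?_ ?_
    · intro k hk _
      simp only [Finset.mem_filter, Finset.mem_univ, true_and, Finset.mem_Iic, Fin.le_def] at hk ⊢
      omega
    · intro k hk _ l hl _ hkl
      simp only [Finset.mem_filter, Finset.mem_univ, true_and, Fin.le_def, Fin.ext_iff] at *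
      omega
    · intro l hl hne
      simp only [Finset.mem_Iic, Fin.le_def] at hl
      have hla : ¬ (l : ℕ) + a < a := by omega
      have hln : (l : ℕ) + a < n - 1 := by omega
      refine ⟨⟨l + a, by omega⟩, ?_, ?_, ?_⟩
      · simp only [Finset.mem_filter, Finset.mem_univ, true_and, Fin.le_def]
        omega
      · simpa [hla, hln, mul_comm] using hne
      · simp
    · intro k hk _
      simp only [Finset.mem_filter, Finset.mem_univ, true_and, Fin.le_def] at hk
      rw [if_neg (by omega), if_pos (by omega), mul_comm]
  · rw [Finset.sum_eq_single j]
    · simp [hja, hjn, mul_comm]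
    · intro k _ hkj
      simp [hja, hjn, hkj]
    · simp

/-- The double ratio is well-defined (Section 4.1): it is unchanged under
triangular changes of the adapted bases `u`, `v` with nonzero diagonal
coefficients and under rescaling of the vectors `g`, `g'`. -/
theorem doubleRatio_basis_independent (n : ℕ) (hn : 2 ≤ n) (p : ℕ) (hp1 : 1 ≤ p)
    (hp2 : p ≤ n - 1) (u v u' v' : Fin n → Fin n → ℝ) (g g' : Fin n → ℝ)
    (h1 : doubleDet n u v p g ≠ 0) (h2 : doubleDet n u v (p - 1) g' ≠ 0)
    (h3 : doubleDet n u v p g' ≠ 0) (h4 : doubleDet n u v (p - 1) g ≠ 0)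
    (α β : Fin n → Fin n → ℝ) (hα : ∀ m, α m m ≠ 0) (hβ : ∀ m, β m m ≠ 0)
    (hu' : ∀ m, u' m = ∑ j ∈ Finset.Iic m, α m j • u j)
    (hv' : ∀ m, v' m = ∑ j ∈ Finset.Iic m, β m j • v j)
    (lam mu : ℝ) (hlam : lam ≠ 0) (hmu : mu ≠ 0) :
    doubleRatio n u' v' (lam • g) (mu • g') p = doubleRatio n u v g g' p := by
  have key : ∀ a ≤ n - 1, ∀ (t : ℝ) (x : Fin n → ℝ), doubleDet n u' v' a (t • x) =
      doubleDet n u v a x * ((doubleTransition n α β a 1).det * t) := fun a ha t x => by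
    rw [doubleDet_eq_mul_det_doubleTransition n a u v u' v' α β hu' hv',
      det_doubleTransition_eq_mul n (by omega) α β a ha]
  have hp := det_doubleTransition_one_ne_zero n α β p hα hβ
  have hq := det_doubleTransition_one_ne_zero n α β (p - 1) hα hβ
  simp only [doubleRatio, key p hp2, key (p - 1) (by omega)]
  field_simp
end
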